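/- Let T be a non-degenerate triangle, ε > 0, n a natural number, and let P ⊆ ℝ² with |P| = n be optimal, i.e., the number of 3-element subsets of P forming a triangle ε-similar to T equals h(n, T, ε). Let H(P), deg(x) and deg(x, y) be as follows: H(P) is the family of 3-element subsets of P forming a triangle ε-similar to T, deg(x) the number of members of H(P) containing x, and deg(x, y) the number containing both x and y. Then: (i) for all distinct x, y ∈ P with deg(x, y) = 0 one has deg(x) = deg(y); and (ii) if {x, y} and {u, v} are two 2-element subsets of P with deg(x, y) = deg(u, v) = 0, then {x, y} and {u, v} are either disjoint or equal. -/

import Mathlib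

open scoped Classical

open EuclideanGeometry

noncomputable section

abbrev Plane := EuclideanSpace ℝ (Fin 2)

/-- A triple of points is a (non-degenerate) triangle if its points are not collinear. -/
def IsTriangle (p : Fin 3 → Plane) : Prop := ¬ Collinear ℝ (Set.range p)

/-- The angle of the triple `p` at its `i`-th vertex. -/
noncomputable def triAngle (p : Fin 3 → Plane) (i : Fin 3) : ℝ :=
  EuclideanGeometry.angle (p (i + 1)) (p i) (p (i + 2))

/-- `p` is ε-similar to `T`: some correspondence of vertices makes corresponding
angles differ by less than ε. -/
def EpsSimilar (ε : ℝ) (p T : Fin 3 → Plane) : Prop :=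
  ∃ σ : Equiv.Perm (Fin 3), ∀ i, |triAngle p i - triAngle T (σ i)| < ε

/-- The finite set `S` forms a triangle ε-similar to `T`. -/
def FormsSimilar (ε : ℝ) (T : Fin 3 → Plane) (S : Finset Plane) : Prop :=
  ∃ p : Fin 3 → Plane, (S : Set Plane) = Set.range p ∧ IsTriangle p ∧ EpsSimilar ε p T

/-- The number of 3-element subsets of `P` forming a triangle ε-similar to `T`. -/
noncomputable def simCount (ε : ℝ) (T : Fin 3 → Plane) (P : Finset Plane) : ℕ :=
  Set.ncard {S : Finset Plane | S ⊆ P ∧ S.card = 3 ∧ FormsSimilar ε T S}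

/-- `hGeo n T ε` = maximum over `n`-point sets `P` of the number of 3-element
subsets of `P` forming a triangle ε-similar to `T`. -/
noncomputable def hGeo (n : ℕ) (T : Fin 3 → Plane) (ε : ℝ) : ℕ :=
  sSup {m | ∃ P : Finset Plane, P.card = n ∧ simCount ε T P = m}

/-- The recurrence defining the sequence `h`. -/
def HRec (h : ℕ → ℕ) : Prop :=
  h 0 = 0 ∧ h 1 = 0 ∧ h 2 = 0 ∧
  ∀ n, 3 ≤ n → IsGreatest
    {m | ∃ a b c : ℕ, a + b + c = n ∧ a ≤ n - 1 ∧ b ≤ n - 1 ∧ c ≤ n - 1 ∧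
      m = a * b * c + h a + h b + h c} (h n)

/-- The number of 3-element subsets of `P` forming a triangle ε-similar to `T`
and containing `x`. -/
noncomputable def degP (ε : ℝ) (T : Fin 3 → Plane) (P : Finset Plane) (x : Plane) : ℕ :=
  Set.ncard {S : Finset Plane | S ⊆ P ∧ S.card = 3 ∧ FormsSimilar ε T S ∧ x ∈ S}

/-- The number of 3-element subsets of `P` forming a triangle ε-similar to `T`
and containing both `x` and `y`. -/
noncomputable def codegP (ε : ℝ) (T : Fin 3 → Plane) (P : Finset Plane)
    (x y : Plane) : ℕ :=
  Set.ncard {S : Finset Plane | S ⊆ P ∧ S.card = 3 ∧ FormsSimilar ε T S ∧ x ∈ S ∧ y ∈ S}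

/-!
In an extremal configuration, replace `y` by a clone of `x`: a new point so close to `x` that
every triangle through `x` stays `ε`-similar to `T` when `x` is moved there. If no triangle contains
both `x` and `y`, this changes the number of triangles by at least `deg x - deg y`, so
`deg x ≤ deg y`, and (i) follows by symmetry. If `{x, y}` and `{x, v}` both have codegree zero and
`y ≠ v`, replace `y` and `v` by two clones of `x` which together with `x` form a tiny copy of `T`:
by (i) the exchange loses nothing, and the tiny copy is a gain of at least one triangle.
-/

open Filter Finset Topology

theorem pair_eq_pair_or_disjoint_of_rightUnique {α : Type*} [DecidableEq α] {r : α → α → Prop}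
    (hsymm : ∀ ⦃a b⦄, r a b → r b a) (huniq : Relator.RightUnique r) {x y u v : α}
    (hxy : r x y) (huv : r u v) :
    ({x, y} : Finset α) = {u, v} ∨ Disjoint ({x, y} : Finset α) {u, v} := by
  by_cases hxu : x = u
  · subst hxu
    exact .inl (by rw [huniq hxy huv])
  by_cases hxv : x = v
  · subst hxv
    exact .inl (by rw [huniq hxy (hsymm huv), pair_comm])
  by_cases hyu : y = u
  · subst hyu
    exact .inl (by rw [huniq (hsymm hxy) huv, pair_comm])
  by_cases hyv : y = v
  · subst hyv
    exact .inl (by rw [huniq (hsymm hxy) (hsymm huv)])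
  exact .inr (by simp [disjoint_left, hxu, hxv, hyu, hyv])

theorem range_update_of_injective {ι β : Type*} [DecidableEq ι] {f : ι → β}
    (hf : Function.Injective f) (i : ι) (b : β) :
    Set.range (Function.update f i b) = insert b (Set.range f \ {f i}) := by
  ext c
  constructor
  · rintro ⟨j, rfl⟩
    obtain rfl | hj := eq_or_ne j i
    · simp
    · simp [hj, hf.eq_iff]
  · rintro (rfl | ⟨⟨j, rfl⟩, hj⟩)
    · exact ⟨i, Function.update_self ..⟩
    · exact ⟨j, Function.update_of_ne (mt (congrArg f) hj) ..⟩

section Hypergraph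

variable {α : Type*} {F : Finset α → Prop} {P Q S : Finset α} {x x' x'' y v : α}

/-- The edges contained in the vertex set `P` of the hypergraph whose edges are the finite sets
satisfying `F`. For `F = FormsSimilar ε T` this is the family `H(P)`. -/
def edgesIn (F : Finset α → Prop) (P : Finset α) : Finset (Finset α) := {S ∈ P.powerset | F S}

/-- The hypergraph `F` has at least as many edges in `P` as in any other vertex set of the same
size. -/
def IsExtremal (F : Finset α → Prop) (P : Finset α) : Prop :=
  ∀ Q : Finset α, #Q = #P → #(edgesIn F Q) ≤ #(edgesIn F P)

/-- The pair of distinct vertices `x`, `y` of `P` has codegree zero: it lies in no edge. -/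
structure IsUncoveredPair (F : Finset α → Prop) (P : Finset α) (x y : α) : Prop where
  left_mem : x ∈ P
  right_mem : y ∈ P
  ne : x ≠ y
  right_notMem : ∀ S ∈ edgesIn F P, x ∈ S → y ∉ S

theorem mem_edgesIn : S ∈ edgesIn F P ↔ S ⊆ P ∧ F S := by
  simp [edgesIn]

theorem edgesIn_mono (h : P ⊆ Q) : edgesIn F P ⊆ edgesIn F Q := fun _ hS ↦
  mem_edgesIn.2 ⟨(mem_edgesIn.1 hS).1.trans h, (mem_edgesIn.1 hS).2⟩

theorem IsUncoveredPair.symm (h : IsUncoveredPair F P x y) : IsUncoveredPair F P y x :=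
  ⟨h.right_mem, h.left_mem, h.ne.symm, fun S hS hy hx ↦ h.right_notMem S hS hx hy⟩

variable [DecidableEq α]

/-- The number of edges of the hypergraph `F` in `P` that contain the vertex `x`. -/
def degIn (F : Finset α → Prop) (P : Finset α) (x : α) : ℕ := #{S ∈ edgesIn F P | x ∈ S}

/-- The point `x'` can take the place of `x` in every edge in `P` through `x`. -/
def IsClone (F : Finset α → Prop) (P : Finset α) (x x' : α) : Prop :=
  ∀ S ∈ edgesIn F P, x ∈ S → F (insert x' (S.erase x))

theorem degIn_mono (h : P ⊆ Q) (x : α) : degIn F P x ≤ degIn F Q x :=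
  card_le_card (filter_subset_filter _ (edgesIn_mono h))

theorem degIn_lt_degIn (h : P ⊆ Q) (hSQ : S ∈ edgesIn F Q) (hSP : ¬S ⊆ P) (hx : x ∈ S) :
    degIn F P x < degIn F Q x := by
  refine card_lt_card (ssubset_iff_of_subset (filter_subset_filter _ (edgesIn_mono h)) |>.2
    ⟨S, mem_filter.2 ⟨hSQ, hx⟩, fun hS ↦ hSP ?_⟩)
  exact (mem_edgesIn.1 (mem_filter.1 hS).1).1

theorem card_edgesIn_erase_add_degIn (F : Finset α → Prop) (P : Finset α) (y : α) :
    #(edgesIn F (P.erase y)) + degIn F P y = #(edgesIn F P) := by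
  have edges_avoiding : edgesIn F (P.erase y) = {S ∈ edgesIn F P | y ∉ S} := by
    ext S
    simp only [mem_edgesIn, mem_filter, subset_erase]
    tauto
  rw [edges_avoiding, degIn, add_comm, card_filter_add_card_filter_not]

theorem card_edgesIn_insert (hx : x ∉ P) :
    #(edgesIn F (insert x P)) = #(edgesIn F P) + degIn F (insert x P) x := by
  rw [← card_edgesIn_erase_add_degIn F (insert x P) x, erase_insert hx]

theorem card_edgesIn_le_erase_erase (F : Finset α → Prop) (P : Finset α) (y v : α) :
    #(edgesIn F P) ≤ #(edgesIn F ((P.erase y).erase v)) + degIn F P y + degIn F P v := by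
  have := card_edgesIn_erase_add_degIn F P y
  have := card_edgesIn_erase_add_degIn F (P.erase y) v
  have := degIn_mono (F := F) (erase_subset y P) v
  lia

theorem degIn_le_degIn_of_forall_subset (h : ∀ S ∈ edgesIn F P, x ∈ S → S ⊆ Q) :
    degIn F P x ≤ degIn F Q x := by
  refine card_le_card fun S hS ↦ ?_
  rw [mem_filter] at hS ⊢
  exact ⟨mem_edgesIn.2 ⟨h S hS.1 hS.2, (mem_edgesIn.1 hS.1).2⟩, hS.2⟩

theorem IsUncoveredPair.degIn_le_degIn_erase (h : IsUncoveredPair F P x y) :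
    degIn F P x ≤ degIn F (P.erase y) x :=
  degIn_le_degIn_of_forall_subset fun S hS hx ↦
    subset_erase.2 ⟨(mem_edgesIn.1 hS).1, h.right_notMem S hS hx⟩

theorem IsUncoveredPair.degIn_le_degIn_erase_erase (hxy : IsUncoveredPair F P x y)
    (hxv : IsUncoveredPair F P x v) : degIn F P x ≤ degIn F ((P.erase y).erase v) x :=
  degIn_le_degIn_of_forall_subset fun S hS hx ↦ subset_erase.2
    ⟨subset_erase.2 ⟨(mem_edgesIn.1 hS).1, hxy.right_notMem S hS hx⟩, hxv.right_notMem S hS hx⟩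

namespace IsClone

theorem mono (h : IsClone F Q x x') (hPQ : P ⊆ Q) : IsClone F P x x' :=
  fun S hS ↦ h S (edgesIn_mono hPQ hS)

theorem degIn_le_degIn_insert (h : IsClone F P x x') (hx' : x' ∉ P) :
    degIn F P x ≤ degIn F (insert x' P) x' := by
  refine card_le_card_of_injOn (fun S ↦ insert x' (S.erase x)) (fun S hS ↦ ?_)
    (Set.LeftInvOn.injOn (f₁' := fun S ↦ insert x (S.erase x')) fun S hS ↦ ?_)
  · obtain ⟨hSP, hxS⟩ := mem_filter.1 hS
    refine mem_filter.2 ⟨mem_edgesIn.2 ⟨?_, h S hSP hxS⟩, mem_insert_self _ _⟩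
    exact insert_subset_insert _ ((erase_subset _ _).trans (mem_edgesIn.1 hSP).1)
  · obtain ⟨hSP, hxS⟩ := mem_filter.1 hS
    have clone_notMem : x' ∉ S.erase x := fun hx'S ↦
      hx' ((mem_edgesIn.1 hSP).1 (mem_of_mem_erase hx'S))
    simp only [erase_insert clone_notMem, insert_erase hxS]

theorem card_edgesIn_add_degIn_le (h : IsClone F P x x') (hx' : x' ∉ P) :
    #(edgesIn F P) + degIn F P x ≤ #(edgesIn F (insert x' P)) := by
  rw [card_edgesIn_insert hx']
  gcongr
  exact h.degIn_le_degIn_insert hx'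

theorem card_edgesIn_add_two_mul_degIn_lt (h' : IsClone F P x x') (h'' : IsClone F P x x'')
    (hx : x ∈ P) (hx' : x' ∉ P) (hx'' : x'' ∉ P) (hne : x' ≠ x'') (hF : F {x, x', x''}) :
    #(edgesIn F P) + 2 * degIn F P x < #(edgesIn F (insert x'' (insert x' P))) := by
  have new_edge_mem : {x, x', x''} ∈ edgesIn F (insert x'' (insert x' P)) :=
    mem_edgesIn.2 ⟨by simp [insert_subset_iff, hx], hF⟩
  have new_edge_not_subset : ¬{x, x', x''} ⊆ insert x'' P := by
    simp [insert_subset_iff, hx', hne]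
  calc #(edgesIn F P) + 2 * degIn F P x
      = #(edgesIn F P) + degIn F P x + degIn F P x := by ring
    _ ≤ #(edgesIn F (insert x' P)) + degIn F (insert x'' P) x'' :=
        add_le_add (h'.card_edgesIn_add_degIn_le hx') (h''.degIn_le_degIn_insert hx'')
    _ < #(edgesIn F (insert x' P)) + degIn F (insert x'' (insert x' P)) x'' :=
        Nat.add_lt_add_left (degIn_lt_degIn (insert_subset_insert _ (subset_insert _ _))
          new_edge_mem new_edge_not_subset (by simp)) _
    _ = #(edgesIn F (insert x'' (insert x' P))) :=
        (card_edgesIn_insert (by simp [hne.symm, hx''])).symm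

end IsClone

namespace IsExtremal

theorem degIn_le (hP : IsExtremal F P) (hxy : IsUncoveredPair F P x y) (hx' : x' ∉ P)
    (hclone : IsClone F P x x') : degIn F P x ≤ degIn F P y := by
  have hx'_notMem_erase : x' ∉ P.erase y := fun h ↦ hx' (mem_of_mem_erase h)
  have card_exchange : #(insert x' (P.erase y)) = #P := by
    rw [card_insert_of_notMem hx'_notMem_erase, card_erase_add_one hxy.right_mem]
  refine le_of_add_le_add_left (a := #(edgesIn F (P.erase y))) ?_
  calc #(edgesIn F (P.erase y)) + degIn F P x
      ≤ #(edgesIn F (P.erase y)) + degIn F (P.erase y) x := by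
        gcongr; exact hxy.degIn_le_degIn_erase
    _ ≤ #(edgesIn F (insert x' (P.erase y))) :=
        (hclone.mono (erase_subset _ _)).card_edgesIn_add_degIn_le hx'_notMem_erase
    _ ≤ #(edgesIn F P) := hP _ card_exchange
    _ = #(edgesIn F (P.erase y)) + degIn F P y := (card_edgesIn_erase_add_degIn F P y).symm

theorem two_mul_degIn_lt (hP : IsExtremal F P) (hxy : IsUncoveredPair F P x y)
    (hxv : IsUncoveredPair F P x v) (hyv : y ≠ v) (hx' : x' ∉ P) (hx'' : x'' ∉ P)
    (hne : x' ≠ x'') (h' : IsClone F P x x') (h'' : IsClone F P x x'') (hF : F {x, x', x''}) :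
    2 * degIn F P x < degIn F P y + degIn F P v := by
  let R := (P.erase y).erase v
  have hRP : R ⊆ P := (erase_subset _ _).trans (erase_subset _ _)
  have hxR : x ∈ R := mem_erase.2 ⟨hxv.ne, mem_erase.2 ⟨hxy.ne, hxy.left_mem⟩⟩
  have hx'R : x' ∉ R := fun h ↦ hx' (hRP h)
  have hx''R : x'' ∉ R := fun h ↦ hx'' (hRP h)
  have card_exchange : #(insert x'' (insert x' R)) = #P := by
    rw [card_insert_of_notMem (by simp [hne.symm, hx''R]), card_insert_of_notMem hx'R,
      card_erase_add_one (mem_erase.2 ⟨hyv.symm, hxv.right_mem⟩),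
      card_erase_add_one hxy.right_mem]
  have gain := (h'.mono hRP).card_edgesIn_add_two_mul_degIn_lt (h''.mono hRP) hxR hx'R hx''R hne hF
  have loss := card_edgesIn_le_erase_erase F P y v
  have deg_le := hxy.degIn_le_degIn_erase_erase hxv
  have extremal := hP _ card_exchange
  lia

end IsExtremal

end Hypergraph

section Triangles

variable {p T : Fin 3 → Plane} {ε : ℝ} {P S : Finset Plane} {x y : Plane}

theorem isTriangle_iff_affineIndependent : IsTriangle p ↔ AffineIndependent ℝ p :=
  affineIndependent_iff_not_collinear.symm

theorem IsTriangle.injective (hp : IsTriangle p) : Function.Injective p :=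
  (isTriangle_iff_affineIndependent.1 hp).injective

theorem IsTriangle.eventually_nhds (hp : IsTriangle p) : ∀ᶠ q in 𝓝 p, IsTriangle q := by
  simp only [isTriangle_iff_affineIndependent] at hp ⊢
  exact isOpen_setOfPred_affineIndependent.mem_nhds hp

theorem continuousAt_triAngle (hp : Function.Injective p) (i : Fin 3) :
    ContinuousAt (triAngle · i) p := by
  have succ_ne : p (i + 1) ≠ p i := hp.ne (by simp)
  have succ_succ_ne : p (i + 2) ≠ p i := hp.ne (by simp)
  exact ContinuousAt.comp (f := fun q : Fin 3 → Plane ↦ (q (i + 1), q i, q (i + 2)))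
    (continuousAt_angle succ_ne succ_succ_ne) (by fun_prop)

theorem EpsSimilar.eventually_nhds (h : EpsSimilar ε p T) (hp : Function.Injective p) :
    ∀ᶠ q in 𝓝 p, EpsSimilar ε q T := by
  obtain ⟨σ, hσ⟩ := h
  have angles_close : ∀ᶠ q in 𝓝 p, ∀ i, |triAngle q i - triAngle T (σ i)| < ε :=
    eventually_all.2 fun i ↦
      ((continuousAt_triAngle hp i).sub continuousAt_const).abs.eventually_lt_const (hσ i)
  exact angles_close.mono fun q hq ↦ ⟨σ, hq⟩

theorem FormsSimilar.eventually_insert_erase (hS : FormsSimilar ε T S) (hx : x ∈ S) :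
    ∀ᶠ z in 𝓝 x, FormsSimilar ε T (insert z (S.erase x)) := by
  obtain ⟨p, hSp, hp, hpT⟩ := hS
  obtain ⟨i, rfl⟩ : x ∈ Set.range p := hSp ▸ hx
  have tendsto_update : Tendsto (Function.update p i) (𝓝 (p i)) (𝓝 p) := by
    have : Continuous (Function.update p i) := by fun_prop
    simpa using this.tendsto (p i)
  filter_upwards [tendsto_update.eventually hp.eventually_nhds,
    tendsto_update.eventually (hpT.eventually_nhds hp.injective)] with z hz hzT
  refine ⟨_, ?_, hz, hzT⟩
  rw [range_update_of_injective hp.injective, coe_insert, coe_erase, hSp]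

theorem eventually_notMem_and_isClone (ε : ℝ) (T : Fin 3 → Plane) (P : Finset Plane) (x : Plane) :
    ∀ᶠ z in 𝓝[≠] x, z ∉ P ∧ IsClone (FormsSimilar ε T) P x z := by
  have notMem : ∀ᶠ z in 𝓝[≠] x, z ∉ P :=
    P.eventually_cofinite_notMem.filter_mono (nhdsNE_le_cofinite x)
  have isClone : ∀ᶠ z in 𝓝 x, IsClone (FormsSimilar ε T) P x z :=
    (eventually_all_finset _).2 fun S hS ↦ eventually_imp_distrib_left.2 fun hx ↦
      (mem_edgesIn.1 hS).2.eventually_insert_erase hx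
  exact notMem.and (isClone.filter_mono nhdsWithin_le_nhds)

/-- The copy of the triple `T` scaled by the factor `t` and placed with its vertex `0` at `x`. -/
def scaledCopy (T : Fin 3 → Plane) (x : Plane) (t : ℝ) (i : Fin 3) : Plane :=
  AffineMap.homothety x t ((x - T 0) + T i)

theorem scaledCopy_apply_zero (T : Fin 3 → Plane) (x : Plane) (t : ℝ) : scaledCopy T x t 0 = x := by
  simp [scaledCopy]

theorem IsTriangle.scaledCopy (hT : IsTriangle T) (x : Plane) {t : ℝ} (ht : t ≠ 0) :
    IsTriangle (scaledCopy T x t) := by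
  rw [isTriangle_iff_affineIndependent] at hT ⊢
  exact hT.vadd.map' (AffineMap.homothety x t) (AffineMap.homothety_injective x ht)

theorem triAngle_scaledCopy (T : Fin 3 → Plane) (x : Plane) {t : ℝ} (ht : t ≠ 0) (i : Fin 3) :
    triAngle (scaledCopy T x t) i = triAngle T i := by
  simp only [triAngle, scaledCopy, angle_homothety _ _ _ _ ht, angle_const_add]

theorem formsSimilar_scaledCopy (hT : IsTriangle T) (hε : 0 < ε) (x : Plane) {t : ℝ} (ht : t ≠ 0) :
    FormsSimilar ε T {x, scaledCopy T x t 1, scaledCopy T x t 2} := by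
  refine ⟨scaledCopy T x t, ?_, hT.scaledCopy x ht, 1, fun i ↦ ?_⟩
  · ext z
    simp [Fin.exists_fin_succ, scaledCopy_apply_zero, eq_comm]
  · simpa [triAngle_scaledCopy T x ht] using hε

theorem tendsto_scaledCopy_nhdsNE (hT : IsTriangle T) (x : Plane) {i : Fin 3} (hi : i ≠ 0) :
    Tendsto (scaledCopy T x · i) (𝓝[≠] 0) (𝓝[≠] x) := by
  refine tendsto_nhdsWithin_iff.2 ⟨?_, ?_⟩
  · have : Continuous (scaledCopy T x · i) := by
      simp only [scaledCopy, AffineMap.homothety_apply]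
      fun_prop
    simpa [scaledCopy] using (this.tendsto 0).mono_left nhdsWithin_le_nhds
  · filter_upwards [self_mem_nhdsWithin] with t ht
    have := (hT.scaledCopy x ht).injective.ne hi
    rwa [scaledCopy_apply_zero] at this

theorem FormsSimilar.card_eq_three (hS : FormsSimilar ε T S) : #S = 3 := by
  obtain ⟨p, hSp, hp, -⟩ := hS
  rw [← Set.ncard_coe_finset, hSp, Set.ncard_range_of_injective hp.injective, Nat.card_fin]

theorem mem_edgesIn_formsSimilar :
    S ∈ edgesIn (FormsSimilar ε T) P ↔ S ⊆ P ∧ #S = 3 ∧ FormsSimilar ε T S := by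
  rw [mem_edgesIn]
  exact and_congr_right fun _ ↦ ⟨fun h ↦ ⟨h.card_eq_three, h⟩, And.right⟩

theorem simCount_eq_card_edgesIn (ε : ℝ) (T : Fin 3 → Plane) (P : Finset Plane) :
    simCount ε T P = #(edgesIn (FormsSimilar ε T) P) := by
  rw [simCount, ← Set.ncard_coe_finset]
  congr 1
  ext S
  simp [mem_edgesIn_formsSimilar]

theorem degP_eq_degIn (ε : ℝ) (T : Fin 3 → Plane) (P : Finset Plane) (x : Plane) :
    degP ε T P x = degIn (FormsSimilar ε T) P x := by
  rw [degP, degIn, ← Set.ncard_coe_finset]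
  congr 1
  ext S
  simp [mem_edgesIn_formsSimilar, and_assoc]

theorem codegP_eq_card_filter (ε : ℝ) (T : Fin 3 → Plane) (P : Finset Plane) (x y : Plane) :
    codegP ε T P x y = #{S ∈ edgesIn (FormsSimilar ε T) P | x ∈ S ∧ y ∈ S} := by
  rw [codegP, ← Set.ncard_coe_finset]
  congr 1
  ext S
  simp [mem_edgesIn_formsSimilar, and_assoc]

theorem isUncoveredPair_of_codegP_eq_zero (hx : x ∈ P) (hy : y ∈ P) (hxy : x ≠ y)
    (h : codegP ε T P x y = 0) : IsUncoveredPair (FormsSimilar ε T) P x y := by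
  rw [codegP_eq_card_filter, card_eq_zero, filter_eq_empty_iff] at h
  exact ⟨hx, hy, hxy, fun S hS hxS hyS ↦ h hS ⟨hxS, hyS⟩⟩

theorem bddAbove_simCount (n : ℕ) (T : Fin 3 → Plane) (ε : ℝ) :
    BddAbove {m | ∃ P : Finset Plane, #P = n ∧ simCount ε T P = m} := by
  refine ⟨2 ^ n, ?_⟩
  rintro _ ⟨Q, rfl, rfl⟩
  rw [simCount_eq_card_edgesIn, ← card_powerset]
  exact card_filter_le _ _

theorem isExtremal_of_simCount_eq_hGeo (hopt : simCount ε T P = hGeo #P T ε) :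
    IsExtremal (FormsSimilar ε T) P := by
  intro Q hQ
  rw [← simCount_eq_card_edgesIn, ← simCount_eq_card_edgesIn, hopt]
  exact le_csSup (bddAbove_simCount _ T ε) ⟨Q, hQ, rfl⟩

theorem IsExtremal.degIn_eq_of_isUncoveredPair (hP : IsExtremal (FormsSimilar ε T) P)
    (hxy : IsUncoveredPair (FormsSimilar ε T) P x y) :
    degIn (FormsSimilar ε T) P x = degIn (FormsSimilar ε T) P y := by
  have degIn_le_of_uncovered {a b : Plane} (hab : IsUncoveredPair (FormsSimilar ε T) P a b) :
      degIn (FormsSimilar ε T) P a ≤ degIn (FormsSimilar ε T) P b := by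
    obtain ⟨a', ha', hclone⟩ := (eventually_notMem_and_isClone ε T P a).exists
    exact hP.degIn_le hab ha' hclone
  exact (degIn_le_of_uncovered hxy).antisymm (degIn_le_of_uncovered hxy.symm)

theorem IsExtremal.rightUnique_isUncoveredPair (hT : IsTriangle T) (hε : 0 < ε)
    (hP : IsExtremal (FormsSimilar ε T) P) :
    Relator.RightUnique (IsUncoveredPair (FormsSimilar ε T) P) := by
  intro x y v hxy hxv
  by_contra hyv
  have clone_eventually {i : Fin 3} (hi : i ≠ 0) :=
    (tendsto_scaledCopy_nhdsNE hT x hi).eventually (eventually_notMem_and_isClone ε T P x)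
  obtain ⟨t, ⟨⟨notMem₁, clone₁⟩, notMem₂, clone₂⟩, ht⟩ :=
    ((clone_eventually (i := 1) (by decide)).and (clone_eventually (i := 2) (by decide))).and
      self_mem_nhdsWithin |>.exists
  have clones_ne : scaledCopy T x t 1 ≠ scaledCopy T x t 2 :=
    (hT.scaledCopy x ht).injective.ne (by decide)
  have gain := hP.two_mul_degIn_lt hxy hxv hyv notMem₁ notMem₂ clones_ne clone₁ clone₂
    (formsSimilar_scaledCopy hT hε x ht)
  have deg_eq_y := hP.degIn_eq_of_isUncoveredPair hxy
  have deg_eq_v := hP.degIn_eq_of_isUncoveredPair hxv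
  lia

end Triangles

/-- In an optimal `n`-point configuration `P`: (i) any two distinct points with
codegree `0` have equal degrees; (ii) any two pairs of points with codegree `0`
are disjoint or coincide. -/
theorem stmt_16 (T : Fin 3 → Plane) (hT : IsTriangle T) (ε : ℝ) (hε : 0 < ε)
    (n : ℕ) (P : Finset Plane) (hcard : P.card = n)
    (hopt : simCount ε T P = hGeo n T ε) :
    (∀ x ∈ P, ∀ y ∈ P, x ≠ y → codegP ε T P x y = 0 →
      degP ε T P x = degP ε T P y) ∧
    (∀ x ∈ P, ∀ y ∈ P, ∀ u ∈ P, ∀ v ∈ P, x ≠ y → u ≠ v →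
      codegP ε T P x y = 0 → codegP ε T P u v = 0 →
      ({x, y} : Finset Plane) = {u, v} ∨
        Disjoint ({x, y} : Finset Plane) ({u, v} : Finset Plane)) := by
  subst hcard
  have hP : IsExtremal (FormsSimilar ε T) P := isExtremal_of_simCount_eq_hGeo hopt
  refine ⟨fun x hx y hy hxy hcodeg ↦ ?_,
    fun x hx y hy u hu v hv hxy huv hcodeg_xy hcodeg_uv ↦ ?_⟩
  · rw [degP_eq_degIn, degP_eq_degIn]
    exact hP.degIn_eq_of_isUncoveredPair (isUncoveredPair_of_codegP_eq_zero hx hy hxy hcodeg)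
  · exact pair_eq_pair_or_disjoint_of_rightUnique (fun _ _ ↦ IsUncoveredPair.symm)
      (hP.rightUnique_isUncoveredPair hT hε) (isUncoveredPair_of_codegP_eq_zero hx hy hxy hcodeg_xy)
      (isUncoveredPair_of_codegP_eq_zero hu hv huv hcodeg_uv)

end
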